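/- For every y ∈ (0,1), the numbers j(y) and k(y) are both strictly positive. -/

import Mathlib

/-! The derivative of `h` is `(1 - 1/y - log y) / log² y`, which is negative by the strict form of
`1 - 1/y ≤ log y`. The reflection `g(y) = h(1 - y)` then gives `g' > 0`. As `g` and `h` are both
negative, the Wronskian `g h' - g' h` is positive, so `j` has the sign of `-h'` and `k` that of
`g'`. -/

noncomputable def gFun (y : ℝ) : ℝ := y / Real.log (1 - y)

noncomputable def hFun (y : ℝ) : ℝ := (1 - y) / Real.log y

/-- Wronskian of `g` and `h`. -/
noncomputable def WFun (y : ℝ) : ℝ := gFun y * deriv hFun y - deriv gFun y * hFun y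

noncomputable def jFun (y : ℝ) : ℝ := -deriv hFun y / WFun y

noncomputable def kFun (y : ℝ) : ℝ := deriv gFun y / WFun y

theorem one_sub_inv_lt_log_of_pos {x : ℝ} (hx : 0 < x) (hx1 : x ≠ 1) :
    1 - x⁻¹ < Real.log x := by
  have h : Real.log x⁻¹ < x⁻¹ - 1 :=
    Real.log_lt_sub_one_of_pos (inv_pos.mpr hx) (inv_ne_one.mpr hx1)
  rw [Real.log_inv] at h
  linarith

theorem hFun_neg {y : ℝ} (hy : 0 < y) (hy1 : y ≠ 1) : hFun y < 0 := by
  rcases hy1.lt_or_gt with hlt | hgt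
  · exact div_neg_of_pos_of_neg (sub_pos.mpr hlt) (Real.log_neg hy hlt)
  · exact div_neg_of_neg_of_pos (sub_neg.mpr hgt) (Real.log_pos hgt)

theorem hasDerivAt_hFun {y : ℝ} (hy : 0 < y) (hy1 : y ≠ 1) :
    HasDerivAt hFun ((1 - y⁻¹ - Real.log y) / Real.log y ^ 2) y := by
  have hlog : Real.log y ≠ 0 := Real.log_ne_zero_of_pos_of_ne_one hy hy1
  have hnum : HasDerivAt (fun t : ℝ => 1 - t) (-1) y := (hasDerivAt_id' y).const_sub 1
  refine (hnum.div (Real.hasDerivAt_log hy.ne') hlog).congr_deriv ?_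
  field_simp
  ring

theorem deriv_hFun_neg {y : ℝ} (hy : 0 < y) (hy1 : y ≠ 1) : deriv hFun y < 0 := by
  rw [(hasDerivAt_hFun hy hy1).deriv]
  exact div_neg_of_neg_of_pos (sub_neg.mpr (one_sub_inv_lt_log_of_pos hy hy1))
    (sq_pos_of_ne_zero (Real.log_ne_zero_of_pos_of_ne_one hy hy1))

theorem gFun_eq_hFun_one_sub (y : ℝ) : gFun y = hFun (1 - y) := by
  rw [gFun, hFun, sub_sub_cancel]

theorem deriv_gFun (y : ℝ) : deriv gFun y = -deriv hFun (1 - y) := by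
  rw [funext gFun_eq_hFun_one_sub, deriv_comp_const_sub]

theorem gFun_neg {y : ℝ} (hy : y < 1) (hy0 : y ≠ 0) : gFun y < 0 := by
  rw [gFun_eq_hFun_one_sub]
  exact hFun_neg (sub_pos.mpr hy) (mt sub_eq_self.mp hy0)

theorem deriv_gFun_pos {y : ℝ} (hy : y < 1) (hy0 : y ≠ 0) : 0 < deriv gFun y := by
  rw [deriv_gFun, neg_pos]
  exact deriv_hFun_neg (sub_pos.mpr hy) (mt sub_eq_self.mp hy0)

theorem WFun_pos {y : ℝ} (hy : y ∈ Set.Ioo (0 : ℝ) 1) : 0 < WFun y := by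
  have hgh' : 0 < gFun y * deriv hFun y :=
    mul_pos_of_neg_of_neg (gFun_neg hy.2 hy.1.ne') (deriv_hFun_neg hy.1 hy.2.ne)
  have hg'h : deriv gFun y * hFun y < 0 :=
    mul_neg_of_pos_of_neg (deriv_gFun_pos hy.2 hy.1.ne') (hFun_neg hy.1 hy.2.ne)
  exact sub_pos.mpr (hg'h.trans hgh')

/-- For every `y ∈ (0,1)`, `j(y)` and `k(y)` are strictly positive. -/
theorem stmt_10 (y : ℝ) (hy : y ∈ Set.Ioo (0 : ℝ) 1) :
    0 < jFun y ∧ 0 < kFun y :=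
  ⟨div_pos (neg_pos.mpr (deriv_hFun_neg hy.1 hy.2.ne)) (WFun_pos hy),
    div_pos (deriv_gFun_pos hy.2 hy.1.ne') (WFun_pos hy)⟩
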